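/- There exists a constant C > 0, depending only on n, κ1 and C₀, such that for every x = (x', x_n) ∈ Ω₁ and all tangential indices α, β ∈ {1,…,n−1}: |∂_α∂_β ũ(x)| ≤ C·|φ(x') − ψ(x')|/(ε + |x'|²) + C·(|x'|/(ε + |x'|²) + 1)·(‖∇φ‖_∞ + ‖∇ψ‖_∞) + C·(‖∇²φ‖_∞ + ‖∇²ψ‖_∞); |∂_α∂_n ũ(x)| ≤ C·|x'|·|φ(x') − ψ(x')|/(ε + |x'|²)² + C·(‖∇φ‖_∞ + ‖∇ψ‖_∞)/(ε + |x'|²); and ∂_n∂_n ũ(x) = 0. -/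

import Mathlib

/-!
With `g = φ - ψ`, `δ = ε + h1 - h2` and `t = x_n - h2 + ε/2`, the function of interest is
`ũ = ψ + g·ū`, and `ū` is characterised by `δ·ū = t`.  Differentiating the last identity once and
twice by the product rule expresses the derivatives of `ū` through those of `δ`, `t` and lower-order
derivatives of `ū` (`D1_ubar`,
`D2_ubar`).  The second-derivative bound `κ1` on `h1, h2`, combined
with the vanishing of their gradients at `0`, gives `|∇h_i(x')| ≤ κ1 |x'|` (`grad_le`), and on `Ω₁`
one has `0 < ū < 1` and `δ ≥ (ε + |x'|²)/C₀`.  Hence `|∂_α ū| ≤ 3κ1|x'|/δ`,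
`|∂_α∂_β ū| ≤ (3κ1 + 12κ1²C₀)/δ`, `∂_n ū = 1/δ`, `|∂_α∂_n ū| ≤ 2κ1|x'|/δ²`, `∂_n∂_n ū = 0`, and the
product rule for `g·ū` concludes.

The suprema defining the norms are taken over the closed ball, with the full Fréchet derivative also
at boundary points, where the functions need not be differentiable.  These suprema are nevertheless
finite: at each point of the closed ball the full derivative is either the junk value `0` or agrees
with the derivative within the ball (`norm_fderiv_le_within`, `norm_fderiv2_le_within`), and the
latter is continuous on a compact set.
-/

open MeasureTheory Metric Finset

noncomputable section

/-- `ℝ^{n-1}`, the horizontal (tangential) variables `x'`. -/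
abbrev Ep (n : ℕ) := EuclideanSpace ℝ (Fin (n - 1))

/-- `ℝ^n = ℝ^{n-1} × ℝ`, points written `x = (x', x_n)`. -/
abbrev Efull (n : ℕ) := Ep n × ℝ

/-- The narrow region `Ω_r`. -/
def Omega (n : ℕ) (ε : ℝ) (h1 h2 : Ep n → ℝ) (r : ℝ) : Set (Efull n) :=
  {x | ‖x.1‖ < r ∧ -ε/2 + h2 x.1 < x.2 ∧ x.2 < ε/2 + h1 x.1}

/-- Top boundary `Γ_r⁺`. -/
def Gammap (n : ℕ) (ε : ℝ) (h1 : Ep n → ℝ) (r : ℝ) : Set (Efull n) :=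
  {x | ‖x.1‖ ≤ r ∧ x.2 = ε/2 + h1 x.1}

/-- Bottom boundary `Γ_r⁻`. -/
def Gammam (n : ℕ) (ε : ℝ) (h2 : Ep n → ℝ) (r : ℝ) : Set (Efull n) :=
  {x | ‖x.1‖ ≤ r ∧ x.2 = -ε/2 + h2 x.1}

/-- `Ω̂_s(x₀) = {x ∈ Ω_{1/2} : |x' - x₀'| < s}`. -/
def OmegaHat (n : ℕ) (ε : ℝ) (h1 h2 : Ep n → ℝ) (x0 : Efull n) (s : ℝ) : Set (Efull n) :=
  {x | x ∈ Omega n ε h1 h2 (1/2) ∧ ‖x.1 - x0.1‖ < s}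

/-- The `n` coordinate directions of `ℝ^{n-1} × ℝ`: the first `n-1` are the horizontal
Euclidean basis vectors, the last is the vertical direction. -/
def dir (n : ℕ) (α : Fin n) : Efull n :=
  if h : (α : ℕ) < n - 1 then (EuclideanSpace.single (⟨(α : ℕ), h⟩ : Fin (n - 1)) 1, (0:ℝ))
  else (0, 1)

/-- Tangential direction `e_α` for `α ∈ {1, …, n-1}`. -/
def tang (n : ℕ) (α : Fin (n - 1)) : Efull n := (EuclideanSpace.single α 1, (0:ℝ))

/-- Vertical direction `e_n`. -/
def vert (n : ℕ) : Efull n := (0, 1)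

/-- Pointwise Laplacian `Δu = Σ_α ∂_α∂_α u`. -/
def lapl (n : ℕ) (u : Efull n → ℝ) (x : Efull n) : ℝ :=
  ∑ α : Fin n, fderiv ℝ (fun y => fderiv ℝ u y (dir n α)) x (dir n α)

/-- The auxiliary function `ū(x', x_n) = (x_n - h2(x') + ε/2)/(ε + h1(x') - h2(x'))`. -/
def ubar (n : ℕ) (ε : ℝ) (h1 h2 : Ep n → ℝ) (x : Efull n) : ℝ :=
  (x.2 - h2 x.1 + ε/2) / (ε + h1 x.1 - h2 x.1)

/-- The auxiliary function `ũ = φ(x')·ū + ψ(x')·(1 - ū)`. -/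
def util (n : ℕ) (ε : ℝ) (h1 h2 φ ψ : Ep n → ℝ) (x : Efull n) : ℝ :=
  φ x.1 * ubar n ε h1 h2 x + ψ x.1 * (1 - ubar n ε h1 h2 x)

/-- `C²`-norm on the closed unit ball: `sup_{|x'| ≤ 1} (|f| + |∇f| + |∇²f|)`. -/
def C2norm {F : Type*} [NormedAddCommGroup F] [NormedSpace ℝ F] (n : ℕ)
    (f : Ep n → F) : ℝ :=
  ⨆ y : closedBall (0 : Ep n) 1,
    (‖f (y : Ep n)‖ + ‖fderiv ℝ f (y : Ep n)‖ + ‖fderiv ℝ (fderiv ℝ f) (y : Ep n)‖)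

/-- `C²(S)`-norm of a function on `ℝ^n`. -/
def C2normOn (n : ℕ) (S : Set (Efull n)) (f : Efull n → ℝ) : ℝ :=
  ⨆ y : S,
    (‖f (y : Efull n)‖ + ‖fderiv ℝ f (y : Efull n)‖ + ‖fderiv ℝ (fderiv ℝ f) (y : Efull n)‖)

/-- `‖∇f‖_∞ = sup_{|x'| ≤ 1} |∇f(x')|`. -/
def gradSup {F : Type*} [NormedAddCommGroup F] [NormedSpace ℝ F] (n : ℕ) (f : Ep n → F) : ℝ :=
  ⨆ y : closedBall (0 : Ep n) 1, ‖fderiv ℝ f (y : Ep n)‖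

/-- `‖∇²f‖_∞ = sup_{|x'| ≤ 1} |∇²f(x')|`. -/
def hessSup {F : Type*} [NormedAddCommGroup F] [NormedSpace ℝ F] (n : ℕ) (f : Ep n → F) : ℝ :=
  ⨆ y : closedBall (0 : Ep n) 1, ‖fderiv ℝ (fderiv ℝ f) (y : Ep n)‖

/-- The geometric hypotheses on `h1, h2`: `C²` on the closed unit ball, the two graphs
do not touch, flatness at the origin, strict convexity of the gap, and `C²`-bound `κ1`. -/
def HGeom (n : ℕ) (ε κ0 κ1 : ℝ) (h1 h2 : Ep n → ℝ) : Prop :=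
  ContDiffOn ℝ 2 h1 (closedBall 0 1) ∧ ContDiffOn ℝ 2 h2 (closedBall 0 1) ∧
  (∀ y : Ep n, ‖y‖ ≤ 1 → -ε/2 + h2 y < ε/2 + h1 y) ∧
  h1 0 = 0 ∧ h2 0 = 0 ∧ fderiv ℝ h1 0 = 0 ∧ fderiv ℝ h2 0 = 0 ∧
  (∀ v : Ep n, κ0 * ‖v‖^2 ≤ fderiv ℝ (fderiv ℝ (fun y => h1 y - h2 y)) 0 v v) ∧
  C2norm n h1 + C2norm n h2 ≤ κ1

/-- Comparability `(ε + |x'|²)/C₀ ≤ δ(x') ≤ C₀ (ε + |x'|²)`. -/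
def DeltaComp (n : ℕ) (ε C₀ : ℝ) (h1 h2 : Ep n → ℝ) : Prop :=
  ∀ y : Ep n, ‖y‖ ≤ 1 →
    (ε + ‖y‖^2) / C₀ ≤ ε + h1 y - h2 y ∧ ε + h1 y - h2 y ≤ C₀ * (ε + ‖y‖^2)

/-- Hypotheses on the coefficients: `C²`-regularity with total `C²(Ω₁)`-norm at most `κ2`,
boundedness `|A| ≤ Λ`, and the weak ellipticity (Legendre) condition with constant `λ`. -/
def CoeffHyp (n N : ℕ) (ε lam Lam κ2 : ℝ) (h1 h2 : Ep n → ℝ)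
    (A : Fin n → Fin n → Fin N → Fin N → Efull n → ℝ)
    (B : Fin n → Fin N → Fin N → Efull n → ℝ)
    (Cc : Fin n → Fin N → Fin N → Efull n → ℝ)
    (Dc : Fin N → Fin N → Efull n → ℝ) : Prop :=
  (∀ α β i j, ContDiffOn ℝ 2 (A α β i j) (Omega n ε h1 h2 1)) ∧
  (∀ α i j, ContDiffOn ℝ 2 (B α i j) (Omega n ε h1 h2 1)) ∧
  (∀ β i j, ContDiffOn ℝ 2 (Cc β i j) (Omega n ε h1 h2 1)) ∧
  (∀ i j, ContDiffOn ℝ 2 (Dc i j) (Omega n ε h1 h2 1)) ∧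
  ((∑ α : Fin n, ∑ β : Fin n, ∑ i : Fin N, ∑ j : Fin N,
      C2normOn n (Omega n ε h1 h2 1) (A α β i j)) +
   (∑ α : Fin n, ∑ i : Fin N, ∑ j : Fin N, C2normOn n (Omega n ε h1 h2 1) (B α i j)) +
   (∑ β : Fin n, ∑ i : Fin N, ∑ j : Fin N, C2normOn n (Omega n ε h1 h2 1) (Cc β i j)) +
   (∑ i : Fin N, ∑ j : Fin N, C2normOn n (Omega n ε h1 h2 1) (Dc i j)) ≤ κ2) ∧
  (∀ α β i j, ∀ x ∈ Omega n ε h1 h2 1, |A α β i j x| ≤ Lam) ∧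
  (∀ ξ : Efull n → EuclideanSpace ℝ (Fin N), ContDiff ℝ (⊤ : ℕ∞) ξ →
    HasCompactSupport ξ → tsupport ξ ⊆ Omega n ε h1 h2 1 →
    lam * ∫ x in Omega n ε h1 h2 1, ‖fderiv ℝ ξ x‖^2 ≤
      ∫ x in Omega n ε h1 h2 1,
        ∑ α : Fin n, ∑ β : Fin n, ∑ i : Fin N, ∑ j : Fin N,
          A α β i j x * fderiv ℝ ξ x (dir n α) i * fderiv ℝ ξ x (dir n β) j)

/-- `u` is a weak solution of
`∂_α(A^{αβ}_{ij} ∂_β u^j + B^α_{ij} u^j) + C^β_{ij} ∂_β u^j + D_{ij} u^j = 0` in `Ω₁`. -/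
def WeakSol (n N : ℕ) (ε : ℝ) (h1 h2 : Ep n → ℝ)
    (A : Fin n → Fin n → Fin N → Fin N → Efull n → ℝ)
    (B : Fin n → Fin N → Fin N → Efull n → ℝ)
    (Cc : Fin n → Fin N → Fin N → Efull n → ℝ)
    (Dc : Fin N → Fin N → Efull n → ℝ)
    (u : Efull n → EuclideanSpace ℝ (Fin N)) : Prop :=
  ContDiffOn ℝ 1 u (Omega n ε h1 h2 1) ∧
  IntegrableOn (fun x => ‖u x‖^2 + ‖fderiv ℝ u x‖^2) (Omega n ε h1 h2 1) ∧
  ∀ ζ : Efull n → EuclideanSpace ℝ (Fin N), ContDiff ℝ (⊤ : ℕ∞) ζ →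
    HasCompactSupport ζ → tsupport ζ ⊆ Omega n ε h1 h2 1 →
    (∫ x in Omega n ε h1 h2 1,
      ((∑ α : Fin n, ∑ i : Fin N,
          ((∑ β : Fin n, ∑ j : Fin N, A α β i j x * fderiv ℝ u x (dir n β) j) +
            ∑ j : Fin N, B α i j x * u x j) * fderiv ℝ ζ x (dir n α) i) -
        ∑ i : Fin N,
          ((∑ β : Fin n, ∑ j : Fin N, Cc β i j x * fderiv ℝ u x (dir n β) j) +
            ∑ j : Fin N, Dc i j x * u x j) * ζ x i)) = 0

/-- `u` attains the boundary values `(φ, ψ)` on `Γ₁⁺` and `Γ₁⁻`. -/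
def AttainsBV {F : Type*} [NormedAddCommGroup F] [NormedSpace ℝ F] (n : ℕ) (ε : ℝ)
    (h1 h2 : Ep n → ℝ) (u : Efull n → F) (φ ψ : Ep n → F) : Prop :=
  ContinuousOn u (Omega n ε h1 h2 1 ∪ Gammap n ε h1 1 ∪ Gammam n ε h2 1) ∧
  (∀ y : Ep n, ‖y‖ ≤ 1 → u (y, ε/2 + h1 y) = φ y ∧ u (y, -ε/2 + h2 y) = ψ y)

/-- `u` is a harmonic function on `Ω₁` with boundary values `φ` on `Γ₁⁺` and `ψ` on `Γ₁⁻`. -/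
def HarmBV (n : ℕ) (ε : ℝ) (h1 h2 : Ep n → ℝ) (u : Efull n → ℝ) (φ ψ : Ep n → ℝ) : Prop :=
  ContDiffOn ℝ 2 u (Omega n ε h1 h2 1) ∧
  (∀ x ∈ Omega n ε h1 h2 1, lapl n u x = 0) ∧
  IntegrableOn (fun x => ‖u x‖^2 + ‖fderiv ℝ u x‖^2) (Omega n ε h1 h2 1) ∧
  AttainsBV n ε h1 h2 u φ ψ

/-! ### Finiteness of the suprema over the closed ball -/

section Bounds

variable {n : ℕ} {f : Ep n → ℝ}

lemma uniqueDiffOn_unitBall {n : ℕ} : UniqueDiffOn ℝ (closedBall (0 : Ep n) 1) :=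
  uniqueDiffOn_convex (convex_closedBall _ _)
    ⟨0, mem_interior.2 ⟨_, ball_subset_closedBall, isOpen_ball, by simp⟩⟩

lemma norm_fderiv_le_within {y : Ep n} (hy : y ∈ closedBall (0 : Ep n) 1) :
    ‖fderiv ℝ f y‖ ≤ ‖fderivWithin ℝ f (closedBall 0 1) y‖ := by
  by_cases hd : DifferentiableAt ℝ f y
  · rw [hd.fderivWithin (uniqueDiffOn_unitBall y hy)]
  · rw [fderiv_zero_of_not_differentiableAt hd, norm_zero]
    exact norm_nonneg _

/-- At a boundary point where `fderiv f` is differentiable, it is continuous there, so it agrees with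
the derivative within the ball at that point too, and the two second derivatives coincide because the
open ball has the unique differentiability property at points of its closure. -/
lemma norm_fderiv2_le_within (hf : ContDiffOn ℝ 2 f (closedBall 0 1)) {y : Ep n}
    (hy : y ∈ closedBall (0 : Ep n) 1) :
    ‖fderiv ℝ (fderiv ℝ f) y‖ ≤
      ‖fderivWithin ℝ (fderivWithin ℝ f (closedBall 0 1)) (closedBall 0 1) y‖ := by
  by_cases hd : DifferentiableAt ℝ (fderiv ℝ f) y
  · have hU := uniqueDiffOn_unitBall (n := n)
    have hG : ContDiffOn ℝ 1 (fderivWithin ℝ f (closedBall 0 1)) (closedBall 0 1) :=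
      hf.fderivWithin hU (by norm_num)
    have hcl : y ∈ closure (ball (0 : Ep n) 1) := by
      rwa [closure_ball _ one_ne_zero]
    have hu : UniqueDiffWithinAt ℝ (ball (0 : Ep n) 1) y :=
      uniqueDiffWithinAt_convex (convex_ball _ _) (by
        rw [interior_eq_iff_isOpen.2 isOpen_ball]; exact ⟨0, by simp⟩) hcl
    have heq : ∀ z ∈ ball (0 : Ep n) 1,
        fderiv ℝ f z = fderivWithin ℝ f (closedBall 0 1) z := fun z hz =>
      (fderivWithin_of_mem_nhds (mem_nhds_iff.2 ⟨_, ball_subset_closedBall, isOpen_ball, hz⟩)).symm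
    have hne : (nhdsWithin y (ball (0 : Ep n) 1)).NeBot := mem_closure_iff_nhdsWithin_neBot.1 hcl
    have heqy : fderiv ℝ f y = fderivWithin ℝ f (closedBall 0 1) y := by
      have h1 : Filter.Tendsto (fderiv ℝ f) (nhdsWithin y (ball 0 1)) (nhds (fderiv ℝ f y)) :=
        hd.continuousAt.tendsto.mono_left nhdsWithin_le_nhds
      have h2 : Filter.Tendsto (fderivWithin ℝ f (closedBall 0 1)) (nhdsWithin y (ball 0 1))
          (nhds (fderivWithin ℝ f (closedBall 0 1) y)) :=
        (hG.continuousOn y hy).mono_left (nhdsWithin_mono _ ball_subset_closedBall)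
      refine tendsto_nhds_unique h1 (h2.congr' ?_)
      filter_upwards [self_mem_nhdsWithin] with z hz using (heq z hz).symm
    rw [← hd.fderivWithin hu, fderivWithin_congr heq heqy,
      fderivWithin_subset ball_subset_closedBall hu (hG.differentiableOn (by norm_num) y hy)]
  · rw [fderiv_zero_of_not_differentiableAt hd]
    exact (le_of_eq (norm_zero (E := Ep n →L[ℝ] Ep n →L[ℝ] ℝ))).trans
      (norm_nonneg (E := Ep n →L[ℝ] Ep n →L[ℝ] ℝ) _)

lemma exists_bound (hf : ContDiffOn ℝ 2 f (closedBall 0 1)) :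
    ∃ M, ∀ y ∈ closedBall (0 : Ep n) 1,
      ‖f y‖ + ‖fderiv ℝ f y‖ + ‖fderiv ℝ (fderiv ℝ f) y‖ ≤ M := by
  have hU := uniqueDiffOn_unitBall (n := n)
  have hG : ContDiffOn ℝ 1 (fderivWithin ℝ f (closedBall 0 1)) (closedBall 0 1) :=
    hf.fderivWithin hU (by norm_num)
  have hH : ContDiffOn ℝ 0 (fderivWithin ℝ (fderivWithin ℝ f (closedBall 0 1)) (closedBall 0 1))
      (closedBall 0 1) := hG.fderivWithin hU (by norm_num)
  have hN : ContinuousOn (fun y => ‖fderivWithin ℝ (fderivWithin ℝ f (closedBall 0 1))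
      (closedBall 0 1) y‖) (closedBall 0 1) :=
    (continuous_norm (E := Ep n →L[ℝ] Ep n →L[ℝ] ℝ)).comp_continuousOn hH.continuousOn
  have hc := (hf.continuousOn.norm.add hG.continuousOn.norm).add hN
  obtain ⟨M, hM⟩ := (isCompact_closedBall (0 : Ep n) 1).bddAbove_image hc
  refine ⟨M, fun y hy => ?_⟩
  have h1 := hM ⟨y, hy, rfl⟩
  have h2 := norm_fderiv_le_within (f := f) hy
  have h3 := norm_fderiv2_le_within hf hy
  simp only [Pi.add_apply] at h1
  linarith

lemma fderiv_le_gradSup (hf : ContDiffOn ℝ 2 f (closedBall 0 1)) {y : Ep n}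
    (hy : y ∈ closedBall (0 : Ep n) 1) : ‖fderiv ℝ f y‖ ≤ gradSup n f := by
  obtain ⟨M, hM⟩ := exists_bound hf
  refine le_ciSup (f := fun y : closedBall (0 : Ep n) 1 => ‖fderiv ℝ f (y : Ep n)‖)
    ⟨M, ?_⟩ ⟨y, hy⟩
  rintro _ ⟨z, rfl⟩
  have := hM z z.2
  have h1 := norm_nonneg (f z)
  have h2 := norm_nonneg (fderiv ℝ (fderiv ℝ f) z)
  dsimp only
  linarith

lemma fderiv2_le_hessSup (hf : ContDiffOn ℝ 2 f (closedBall 0 1)) {y : Ep n}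
    (hy : y ∈ closedBall (0 : Ep n) 1) : ‖fderiv ℝ (fderiv ℝ f) y‖ ≤ hessSup n f := by
  obtain ⟨M, hM⟩ := exists_bound hf
  refine le_ciSup (f := fun y : closedBall (0 : Ep n) 1 => ‖fderiv ℝ (fderiv ℝ f) (y : Ep n)‖)
    ⟨M, ?_⟩ ⟨y, hy⟩
  rintro _ ⟨z, rfl⟩
  have := hM z z.2
  have h1 := norm_nonneg (f z)
  have h2 := norm_nonneg (fderiv ℝ f z)
  dsimp only
  linarith

lemma C2norm_nonneg : 0 ≤ C2norm n f := Real.iSup_nonneg fun _ => by positivity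

lemma fderiv2_le_C2norm (hf : ContDiffOn ℝ 2 f (closedBall 0 1)) {y : Ep n}
    (hy : y ∈ closedBall (0 : Ep n) 1) : ‖fderiv ℝ (fderiv ℝ f) y‖ ≤ C2norm n f := by
  obtain ⟨M, hM⟩ := exists_bound hf
  have h := le_ciSup (f := fun y : closedBall (0 : Ep n) 1 =>
    ‖f (y : Ep n)‖ + ‖fderiv ℝ f (y : Ep n)‖ + ‖fderiv ℝ (fderiv ℝ f) (y : Ep n)‖)
    ⟨M, by rintro _ ⟨z, rfl⟩; exact hM z z.2⟩ ⟨y, hy⟩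
  have h1 := norm_nonneg (f y)
  have h2 := norm_nonneg (fderiv ℝ f y)
  simp only [] at h
  unfold C2norm
  linarith

lemma contDiffAt_of_ball (hf : ContDiffOn ℝ 2 f (closedBall 0 1)) {y : Ep n} (hy : ‖y‖ < 1) :
    ContDiffAt ℝ 2 f y :=
  hf.contDiffAt (mem_nhds_iff.2 ⟨_, ball_subset_closedBall, isOpen_ball, by simpa using hy⟩)

lemma grad_le (hf : ContDiffOn ℝ 2 f (closedBall 0 1)) (h0 : fderiv ℝ f 0 = 0) {κ : ℝ}
    (hκ : C2norm n f ≤ κ) {y : Ep n} (hy : ‖y‖ < 1) : ‖fderiv ℝ f y‖ ≤ κ * ‖y‖ := by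
  have h := Convex.norm_image_sub_le_of_norm_fderiv_le (𝕜 := ℝ) (f := fderiv ℝ f) (C := κ)
    (s := ball (0 : Ep n) 1) (x := 0) (y := y)
    (fun z hz => ((contDiffAt_of_ball hf (by simpa using hz)).fderiv_right
      (m := 1) (by norm_num)).differentiableAt (by norm_num))
    (fun z hz => (fderiv2_le_C2norm hf (ball_subset_closedBall hz)).trans hκ)
    (convex_ball _ _) (by simp) (by simpa using hy)
  simpa [h0] using h

end Bounds

/-! ### Calculus of iterated directional derivatives -/

section Calculus

variable {E : Type*} [NormedAddCommGroup E] [NormedSpace ℝ E]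

/-- The iterated directional derivative `∂_w ∂_v f (x)`. -/
def D2 (f : E → ℝ) (x v w : E) : ℝ := fderiv ℝ (fun y => fderiv ℝ f y v) x w

variable {f g : E → ℝ} {x : E}

lemma evDiff (hf : ContDiffAt ℝ 2 f x) : ∀ᶠ y in nhds x, DifferentiableAt ℝ f y := by
  filter_upwards [hf.eventually (by simp)] with y hy using hy.differentiableAt (by norm_num)

lemma diffD1 (hf : ContDiffAt ℝ 2 f x) (v : E) :
    DifferentiableAt ℝ (fun y => fderiv ℝ f y v) x :=
  ((hf.fderiv_right (m := 1) (by norm_num)).differentiableAt (by norm_num)).clm_apply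
    (differentiableAt_const v)

lemma D1_mul (hf : ContDiffAt ℝ 2 f x) (hg : ContDiffAt ℝ 2 g x) (v : E) :
    fderiv ℝ (fun y => f y * g y) x v = f x * fderiv ℝ g x v + g x * fderiv ℝ f x v := by
  rw [fderiv_fun_mul (hf.differentiableAt (by norm_num)) (hg.differentiableAt (by norm_num))]
  simp

lemma D2_add (hf : ContDiffAt ℝ 2 f x) (hg : ContDiffAt ℝ 2 g x) (v w : E) :
    D2 (fun y => f y + g y) x v w = D2 f x v w + D2 g x v w := by
  have h : (fun y => fderiv ℝ (fun y => f y + g y) y v) =ᶠ[nhds x]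
      fun y => fderiv ℝ f y v + fderiv ℝ g y v := by
    filter_upwards [evDiff hf, evDiff hg] with y h1 h2
    rw [fderiv_fun_add h1 h2]; rfl
  unfold D2
  rw [h.fderiv_eq, fderiv_fun_add (diffD1 hf v) (diffD1 hg v)]
  rfl

lemma D2_sub (hf : ContDiffAt ℝ 2 f x) (hg : ContDiffAt ℝ 2 g x) (v w : E) :
    D2 (fun y => f y - g y) x v w = D2 f x v w - D2 g x v w := by
  have h : (fun y => fderiv ℝ (fun y => f y - g y) y v) =ᶠ[nhds x]
      fun y => fderiv ℝ f y v - fderiv ℝ g y v := by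
    filter_upwards [evDiff hf, evDiff hg] with y h1 h2
    rw [fderiv_fun_sub h1 h2]; rfl
  unfold D2
  rw [h.fderiv_eq, fderiv_fun_sub (diffD1 hf v) (diffD1 hg v)]
  rfl

lemma D2_mul (hf : ContDiffAt ℝ 2 f x) (hg : ContDiffAt ℝ 2 g x) (v w : E) :
    D2 (fun y => f y * g y) x v w =
      f x * D2 g x v w + fderiv ℝ f x w * fderiv ℝ g x v +
        fderiv ℝ g x w * fderiv ℝ f x v + g x * D2 f x v w := by
  have h : (fun y => fderiv ℝ (fun y => f y * g y) y v) =ᶠ[nhds x]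
      fun y => f y * fderiv ℝ g y v + g y * fderiv ℝ f y v := by
    filter_upwards [evDiff hf, evDiff hg] with y h1 h2
    rw [fderiv_fun_mul h1 h2]; simp
  have hf1 := hf.differentiableAt (by norm_num)
  have hg1 := hg.differentiableAt (by norm_num)
  unfold D2
  rw [h.fderiv_eq, fderiv_fun_add (hf1.fun_mul (diffD1 hg v)) (hg1.fun_mul (diffD1 hf v)),
    fderiv_fun_mul hf1 (diffD1 hg v), fderiv_fun_mul hg1 (diffD1 hf v)]
  simp only [add_apply, smul_apply, smul_eq_mul]
  ring

lemma D2_congr (h : f =ᶠ[nhds x] g) (v w : E) : D2 f x v w = D2 g x v w := by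
  have : (fun y => fderiv ℝ f y v) =ᶠ[nhds x] fun y => fderiv ℝ g y v := by
    filter_upwards [h.eventuallyEq_nhds] with y hy
    rw [hy.fderiv_eq]
  unfold D2
  rw [this.fderiv_eq]

variable {F : Type*} [NormedAddCommGroup F] [NormedSpace ℝ F]

lemma cd_fst {f : E → ℝ} {x : E × F} (hf : ContDiffAt ℝ 2 f x.1) :
    ContDiffAt ℝ 2 (fun y : E × F => f y.1) x :=
  ContDiffAt.comp x hf contDiffAt_fst

lemma D1_fst {f : E → ℝ} {x : E × F} (hf : DifferentiableAt ℝ f x.1) (v : E × F) :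
    fderiv ℝ (fun y : E × F => f y.1) x v = fderiv ℝ f x.1 v.1 := by
  have := (hf.hasFDerivAt.comp x (hasFDerivAt_fst (𝕜 := ℝ) (p := x))).fderiv
  have h2 : (f ∘ Prod.fst) = fun y : E × F => f y.1 := rfl
  rw [h2] at this
  rw [this]; rfl

lemma D2_fst {f : E → ℝ} {x : E × F} (hf : ContDiffAt ℝ 2 f x.1) (v w : E × F) :
    D2 (fun y : E × F => f y.1) x v w = fderiv ℝ (fderiv ℝ f) x.1 w.1 v.1 := by
  have h : (fun y : E × F => fderiv ℝ (fun y : E × F => f y.1) y v) =ᶠ[nhds x]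
      fun y => (fun z => fderiv ℝ f z v.1) y.1 := by
    filter_upwards [continuousAt_fst.eventually (evDiff hf)] with y hy
    exact D1_fst hy v
  unfold D2
  rw [h.fderiv_eq, D1_fst (diffD1 hf v.1)]
  have hd : DifferentiableAt ℝ (fderiv ℝ f) x.1 :=
    (hf.fderiv_right (m := 1) (by norm_num)).differentiableAt (by norm_num)
  rw [fderiv_clm_apply hd (differentiableAt_const _)]
  simp

/-- The numerator of `ubar` is `h2` subtracted from this affine function. -/
lemma D2_snd_add_const (c : ℝ) (x v w : E × ℝ) :
    D2 (fun y : E × ℝ => y.2 + c) x v w = 0 := by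
  have h : (fun y : E × ℝ => fderiv ℝ (fun y : E × ℝ => y.2 + c) y v) = fun _ => v.2 := by
    funext y
    rw [fderiv_add_const, fderiv_snd]; rfl
  unfold D2
  rw [h]; simp

end Calculus

/-! ### Derivatives of the auxiliary functions -/

section Aux

variable {n : ℕ} {ε : ℝ} {h1 h2 : Ep n → ℝ} {x : Efull n}

lemma cd_ubar (c1 : ContDiffAt ℝ 2 h1 x.1) (c2 : ContDiffAt ℝ 2 h2 x.1)
    (hδ : 0 < ε + h1 x.1 - h2 x.1) : ContDiffAt ℝ 2 (ubar n ε h1 h2) x := by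
  have e1 := cd_fst (F := ℝ) (x := x) c1
  have e2 := cd_fst (F := ℝ) (x := x) c2
  exact ((contDiffAt_snd.sub e2).add contDiffAt_const).div
    ((contDiffAt_const.add e1).sub e2) hδ.ne'

lemma ubar_mul_eventually (c1 : ContDiffAt ℝ 2 h1 x.1) (c2 : ContDiffAt ℝ 2 h2 x.1)
    (hδ : 0 < ε + h1 x.1 - h2 x.1) :
    (fun y : Efull n => (ε + h1 y.1 - h2 y.1) * ubar n ε h1 h2 y) =ᶠ[nhds x]
      fun y => (y.2 + ε / 2) - h2 y.1 := by
  have e1 := (cd_fst (F := ℝ) (x := x) c1).continuousAt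
  have e2 := (cd_fst (F := ℝ) (x := x) c2).continuousAt
  have e : ContinuousAt (fun y : Efull n => ε + h1 y.1 - h2 y.1) x :=
    (continuousAt_const.add e1).sub e2
  filter_upwards [e.eventually (lt_mem_nhds hδ)] with y hy
  unfold ubar
  rw [mul_div_cancel₀ _ hy.ne']
  ring

lemma D1_ubar (c1 : ContDiffAt ℝ 2 h1 x.1) (c2 : ContDiffAt ℝ 2 h2 x.1)
    (hδ : 0 < ε + h1 x.1 - h2 x.1) (v : Efull n) :
    (ε + h1 x.1 - h2 x.1) * fderiv ℝ (ubar n ε h1 h2) x v =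
      v.2 - fderiv ℝ h2 x.1 v.1 -
        ubar n ε h1 h2 x * (fderiv ℝ h1 x.1 v.1 - fderiv ℝ h2 x.1 v.1) := by
  have cδ : ContDiffAt ℝ 2 (fun y => ε + h1 y - h2 y) x.1 := (contDiffAt_const.add c1).sub c2
  have d1 : DifferentiableAt ℝ h1 x.1 := c1.differentiableAt (by norm_num)
  have d2 : DifferentiableAt ℝ h2 x.1 := c2.differentiableAt (by norm_num)
  have h := D1_mul (cd_fst (F := ℝ) (x := x) cδ) (cd_ubar c1 c2 hδ) v
  rw [(ubar_mul_eventually c1 c2 hδ).fderiv_eq,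
    D1_fst (f := fun y => ε + h1 y - h2 y) (cδ.differentiableAt (by norm_num)),
    fderiv_fun_sub (differentiableAt_snd.add_const _)
      ((cd_fst (F := ℝ) (x := x) c2).differentiableAt (by norm_num)),
    fderiv_add_const, fderiv_snd, fderiv_fun_sub (d1.const_add _) d2, fderiv_const_add] at h
  simp only [sub_apply, ContinuousLinearMap.coe_snd', D1_fst d2] at h
  linarith

lemma D2_ubar (c1 : ContDiffAt ℝ 2 h1 x.1) (c2 : ContDiffAt ℝ 2 h2 x.1)
    (hδ : 0 < ε + h1 x.1 - h2 x.1) (v w : Efull n) :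
    (ε + h1 x.1 - h2 x.1) * D2 (ubar n ε h1 h2) x v w =
      - fderiv ℝ (fderiv ℝ h2) x.1 w.1 v.1 -
        (fderiv ℝ h1 x.1 w.1 - fderiv ℝ h2 x.1 w.1) * fderiv ℝ (ubar n ε h1 h2) x v -
        (fderiv ℝ h1 x.1 v.1 - fderiv ℝ h2 x.1 v.1) * fderiv ℝ (ubar n ε h1 h2) x w -
        ubar n ε h1 h2 x *
          (fderiv ℝ (fderiv ℝ h1) x.1 w.1 v.1 - fderiv ℝ (fderiv ℝ h2) x.1 w.1 v.1) := by
  have ce : ContDiffAt ℝ 2 (fun y => ε + h1 y) x.1 := contDiffAt_const.add c1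
  have cδ : ContDiffAt ℝ 2 (fun y => ε + h1 y - h2 y) x.1 := ce.sub c2
  have d1 : DifferentiableAt ℝ h1 x.1 := c1.differentiableAt (by norm_num)
  have d2 : DifferentiableAt ℝ h2 x.1 := c2.differentiableAt (by norm_num)
  have h := D2_mul (cd_fst (F := ℝ) (x := x) cδ) (cd_ubar c1 c2 hδ) v w
  have hs : ContDiffAt ℝ 2 (fun y : Efull n => y.2 + ε / 2) x :=
    contDiffAt_snd.add contDiffAt_const
  have he : fderiv ℝ (fun y => ε + h1 y) = fderiv ℝ h1 := by
    funext y; exact fderiv_const_add _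
  rw [D2_congr (ubar_mul_eventually c1 c2 hδ), D2_sub hs (cd_fst c2), D2_snd_add_const,
    D2_fst c2, D1_fst (f := fun y => ε + h1 y - h2 y) (cδ.differentiableAt (by norm_num)),
    D1_fst (f := fun y => ε + h1 y - h2 y) (cδ.differentiableAt (by norm_num)),
    D2_sub (cd_fst ce) (cd_fst c2), D2_fst ce, D2_fst c2, he,
    fderiv_fun_sub (d1.const_add _) d2, fderiv_const_add] at h
  simp only [sub_apply] at h
  linarith

lemma D2_util {φ ψ : Ep n → ℝ} (c1 : ContDiffAt ℝ 2 h1 x.1) (c2 : ContDiffAt ℝ 2 h2 x.1)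
    (hδ : 0 < ε + h1 x.1 - h2 x.1)
    (cφ : ContDiffAt ℝ 2 φ x.1) (cψ : ContDiffAt ℝ 2 ψ x.1) (v w : Efull n) :
    D2 (util n ε h1 h2 φ ψ) x v w =
      fderiv ℝ (fderiv ℝ ψ) x.1 w.1 v.1 +
      ((φ x.1 - ψ x.1) * D2 (ubar n ε h1 h2) x v w +
        (fderiv ℝ φ x.1 w.1 - fderiv ℝ ψ x.1 w.1) * fderiv ℝ (ubar n ε h1 h2) x v +
        (fderiv ℝ φ x.1 v.1 - fderiv ℝ ψ x.1 v.1) * fderiv ℝ (ubar n ε h1 h2) x w +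
        ubar n ε h1 h2 x *
          (fderiv ℝ (fderiv ℝ φ) x.1 w.1 v.1 - fderiv ℝ (fderiv ℝ ψ) x.1 w.1 v.1)) := by
  have cg : ContDiffAt ℝ 2 (fun y => φ y - ψ y) x.1 := cφ.sub cψ
  have cu := cd_ubar c1 c2 hδ
  have hu : util n ε h1 h2 φ ψ =
      fun y => ψ y.1 + (φ y.1 - ψ y.1) * ubar n ε h1 h2 y := by
    funext y; unfold util; ring
  have cgf := cd_fst (F := ℝ) (x := x) cg
  rw [hu, D2_add (cd_fst cψ) (cgf.mul cu), D2_fst cψ, D2_mul cgf cu,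
    D1_fst (f := fun y => φ y - ψ y) (cg.differentiableAt (by norm_num)),
    D1_fst (f := fun y => φ y - ψ y) (cg.differentiableAt (by norm_num)),
    D2_sub (cd_fst cφ) (cd_fst cψ), D2_fst cφ, D2_fst cψ,
    fderiv_fun_sub (cφ.differentiableAt (by norm_num)) (cψ.differentiableAt (by norm_num))]
  simp only [sub_apply]
  ring

end Aux

/-! ### The estimates -/

lemma abs_le_div_of_mul {d q z B c : ℝ} (hd : 0 < d) (hq : 0 < q) (hc : 0 < c)
    (hcomp : q / c ≤ d) (h : |d * z| ≤ B) : |z| ≤ c * B / q := by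
  have hB : 0 ≤ B := (abs_nonneg _).trans h
  rw [abs_mul, abs_of_pos hd] at h
  rw [div_le_iff₀ hc] at hcomp
  rw [le_div_iff₀ hq]
  calc |z| * q ≤ |z| * (d * c) := by gcongr
    _ = c * (d * |z|) := by ring
    _ ≤ c * B := by gcongr

lemma abs_mul_le_mul {a b A B : ℝ} (ha : |a| ≤ A) (hb : |b| ≤ B) : |a * b| ≤ A * B := by
  rw [abs_mul]
  exact mul_le_mul ha hb (abs_nonneg _) ((abs_nonneg _).trans ha)

theorem stmt9 (n : ℕ) (hn : 2 ≤ n) (κ1 C₀ : ℝ) (hκ1 : 0 < κ1) (hC₀ : 1 ≤ C₀) :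
    ∃ C : ℝ, 0 < C ∧
      ∀ κ0 : ℝ, 0 < κ0 → ∀ ε ∈ Set.Ioo (0:ℝ) 1, ∀ h1 h2 : Ep n → ℝ,
        HGeom n ε κ0 κ1 h1 h2 → DeltaComp n ε C₀ h1 h2 →
        ∀ φ ψ : Ep n → ℝ,
          ContDiffOn ℝ 2 φ (closedBall 0 1) → ContDiffOn ℝ 2 ψ (closedBall 0 1) →
        ∀ x ∈ Omega n ε h1 h2 1, ∀ α β : Fin (n - 1),
          |fderiv ℝ (fun y => fderiv ℝ (util n ε h1 h2 φ ψ) y (tang n β)) x (tang n α)| ≤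
            C * |φ x.1 - ψ x.1| / (ε + ‖x.1‖^2) +
            C * (‖x.1‖ / (ε + ‖x.1‖^2) + 1) * (gradSup n φ + gradSup n ψ) +
            C * (hessSup n φ + hessSup n ψ) ∧
          |fderiv ℝ (fun y => fderiv ℝ (util n ε h1 h2 φ ψ) y (vert n)) x (tang n α)| ≤
            C * ‖x.1‖ * |φ x.1 - ψ x.1| / (ε + ‖x.1‖^2)^2 +
            C * (gradSup n φ + gradSup n ψ) / (ε + ‖x.1‖^2) ∧
          fderiv ℝ (fun y => fderiv ℝ (util n ε h1 h2 φ ψ) y (vert n)) x (vert n) = 0 := by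
  have hC0 : 0 < C₀ := by linarith
  refine ⟨2 + C₀ + 6 * κ1 * C₀ + C₀ * (3 * κ1 + 12 * κ1 ^ 2 * C₀) + 2 * κ1 * C₀ ^ 2,
    by positivity, ?_⟩
  intro κ0 _ ε hε h1 h2 hG hD φ ψ hφ hψ x hx α β
  obtain ⟨hh1, hh2, hpos, -, -, g1, g2, -, hκ⟩ := hG
  obtain ⟨hx1, hx2, hx3⟩ := hx
  have hxc : x.1 ∈ closedBall (0 : Ep n) 1 := by simpa using hx1.le
  have hδ : 0 < ε + h1 x.1 - h2 x.1 := by linarith [hpos x.1 hx1.le]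
  have hcomp := (hD x.1 hx1.le).1
  have c1 := contDiffAt_of_ball hh1 hx1
  have c2 := contDiffAt_of_ball hh2 hx1
  have cφ := contDiffAt_of_ball hφ hx1
  have cψ := contDiffAt_of_ball hψ hx1
  have hk1 : C2norm n h1 ≤ κ1 := by linarith [C2norm_nonneg (f := h2)]
  have hk2 : C2norm n h2 ≤ κ1 := by linarith [C2norm_nonneg (f := h1)]
  have hU0 : 0 ≤ ubar n ε h1 h2 x := div_nonneg (by linarith) hδ.le
  have hU1 : ubar n ε h1 h2 x ≤ 1 := (div_le_one hδ).2 (by linarith)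
  have hUa : |ubar n ε h1 h2 x| ≤ 1 := abs_le.2 ⟨by linarith, hU1⟩
  have hr := norm_nonneg x.1
  have hq : 0 < ε + ‖x.1‖ ^ 2 := by have := hε.1; positivity
  have hrq : ‖x.1‖ ^ 2 ≤ ε + ‖x.1‖ ^ 2 := by linarith [hε.1]
  -- evaluations on unit vectors are controlled by operator norms
  have ev1 : ∀ (L : Ep n →L[ℝ] ℝ) (γ : Fin (n - 1)) (B : ℝ), ‖L‖ ≤ B →
      |L (tang n γ).1| ≤ B := fun L γ B hB => by
    have := L.le_opNorm (EuclideanSpace.single γ (1 : ℝ))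
    simp only [PiLp.norm_single, norm_one, mul_one, Real.norm_eq_abs] at this
    exact this.trans hB
  have ev2 : ∀ (L : Ep n →L[ℝ] Ep n →L[ℝ] ℝ) (γ η : Fin (n - 1)) (B : ℝ), ‖L‖ ≤ B →
      |L (tang n γ).1 (tang n η).1| ≤ B := fun L γ η B hB => by
    have := L.le_opNorm (EuclideanSpace.single γ (1 : ℝ))
    simp only [PiLp.norm_single, norm_one, mul_one] at this
    exact ev1 _ _ _ (this.trans hB)
  have tv : ∀ γ, (tang n γ).2 = 0 := fun _ => rfl
  have v1 : (vert n).1 = 0 := rfl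
  have v2 : (vert n).2 = 1 := rfl
  have a1 := fun γ => ev1 _ γ _ (grad_le hh1 g1 hk1 hx1)
  have a2 := fun γ => ev1 _ γ _ (grad_le hh2 g2 hk2 hx1)
  have aφ := fun γ => ev1 _ γ _ (fderiv_le_gradSup hφ hxc)
  have aψ := fun γ => ev1 _ γ _ (fderiv_le_gradSup hψ hxc)
  have b1 := ev2 _ α β _ ((fderiv2_le_C2norm hh1 hxc).trans hk1)
  have b2 := ev2 _ α β _ ((fderiv2_le_C2norm hh2 hxc).trans hk2)
  have bφ := ev2 _ α β _ (fderiv2_le_hessSup hφ hxc)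
  have bψ := ev2 _ α β _ (fderiv2_le_hessSup hψ hxc)
  have G1 := fun γ => D1_ubar c1 c2 hδ (tang n γ)
  have Gn := D1_ubar c1 c2 hδ (vert n)
  have Gab := D2_ubar c1 c2 hδ (tang n β) (tang n α)
  have Gan := D2_ubar c1 c2 hδ (vert n) (tang n α)
  have Gnn := D2_ubar c1 c2 hδ (vert n) (vert n)
  have Hab := D2_util c1 c2 hδ cφ cψ (tang n β) (tang n α)
  have Han := D2_util c1 c2 hδ cφ cψ (vert n) (tang n α)
  have Hnn := D2_util c1 c2 hδ cφ cψ (vert n) (vert n)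
  simp only [v1, v2, tv, map_zero, sub_zero, zero_sub, mul_zero,
    zero_mul, add_zero, zero_add, neg_zero] at G1 Gn Gab Gan Gnn Hab Han Hnn
  have hnn : D2 (ubar n ε h1 h2) x (vert n) (vert n) = 0 :=
    (mul_eq_zero.1 Gnn).resolve_left hδ.ne'
  have dsub : ∀ {a b A B : ℝ}, |a| ≤ A → |b| ≤ B → |a - b| ≤ A + B := fun ha hb =>
    (abs_sub _ _).trans (add_le_add ha hb)
  have dadd : ∀ {a b A B : ℝ}, |a| ≤ A → |b| ≤ B → |a + b| ≤ A + B := fun ha hb =>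
    (abs_add_le _ _).trans (add_le_add ha hb)
  -- the bounds for the derivatives of `ubar`
  have U1 : ∀ γ, |fderiv ℝ (ubar n ε h1 h2) x (tang n γ)| ≤
      3 * κ1 * C₀ * (‖x.1‖ / (ε + ‖x.1‖ ^ 2)) := fun γ => by
    have h := dsub (b := ubar n ε h1 h2 x * _) ((abs_neg _).trans_le (a2 γ))
      (abs_mul_le_mul hUa (dsub (a1 γ) (a2 γ)))
    rw [← G1 γ] at h
    exact (abs_le_div_of_mul hδ hq hC0 hcomp h).trans_eq (by ring)
  have Un : |fderiv ℝ (ubar n ε h1 h2) x (vert n)| ≤ C₀ * 1 / (ε + ‖x.1‖ ^ 2) :=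
    abs_le_div_of_mul hδ hq hC0 hcomp (by rw [Gn, abs_one])
  have Uab : |D2 (ubar n ε h1 h2) x (tang n β) (tang n α)| ≤
      C₀ * (3 * κ1 + 12 * κ1 ^ 2 * C₀) / (ε + ‖x.1‖ ^ 2) := by
    refine abs_le_div_of_mul hδ hq hC0 hcomp ?_
    rw [Gab]
    have h := dsub (dsub (dsub ((abs_neg _).trans_le b2)
      (abs_mul_le_mul (dsub (a1 α) (a2 α)) (U1 β)))
      (abs_mul_le_mul (dsub (a1 β) (a2 β)) (U1 α)))
      (abs_mul_le_mul hUa (dsub b1 b2))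
    refine h.trans ?_
    have hle : ‖x.1‖ ^ 2 / (ε + ‖x.1‖ ^ 2) ≤ 1 := (div_le_one hq).2 hrq
    have : 12 * κ1 ^ 2 * C₀ * (‖x.1‖ ^ 2 / (ε + ‖x.1‖ ^ 2)) ≤ 12 * κ1 ^ 2 * C₀ * 1 := by gcongr
    linear_combination this
  have Uan : |D2 (ubar n ε h1 h2) x (vert n) (tang n α)| ≤
      2 * κ1 * C₀ ^ 2 * (‖x.1‖ / (ε + ‖x.1‖ ^ 2) ^ 2) := by
    have h := abs_mul_le_mul (dsub (a1 α) (a2 α)) Un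
    rw [← abs_neg, ← Gan] at h
    refine (abs_le_div_of_mul hδ hq hC0 hcomp h).trans_eq ?_
    field_simp
    ring
  have Gφ : 0 ≤ gradSup n φ := (abs_nonneg _).trans (aφ α)
  have Gψ : 0 ≤ gradSup n ψ := (abs_nonneg _).trans (aψ α)
  have Hφ : 0 ≤ hessSup n φ := (abs_nonneg _).trans bφ
  have Hψ : 0 ≤ hessSup n ψ := (abs_nonneg _).trans bψ
  have p1 : 0 ≤ κ1 * C₀ := by positivity
  have p2 : 0 ≤ C₀ * (3 * κ1 + 12 * κ1 ^ 2 * C₀) := by positivity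
  have p3 : 0 ≤ κ1 * C₀ ^ 2 := by positivity
  set C := 2 + C₀ + 6 * κ1 * C₀ + C₀ * (3 * κ1 + 12 * κ1 ^ 2 * C₀) + 2 * κ1 * C₀ ^ 2 with hC
  refine ⟨?_, ?_, ?_⟩
  · change |D2 (util n ε h1 h2 φ ψ) x (tang n β) (tang n α)| ≤ _
    rw [Hab]
    have h := dadd bψ (dadd (dadd (dadd (abs_mul_le_mul (le_refl |φ x.1 - ψ x.1|) Uab)
      (abs_mul_le_mul (dsub (aφ α) (aψ α)) (U1 β)))
      (abs_mul_le_mul (dsub (aφ β) (aψ β)) (U1 α)))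
      (abs_mul_le_mul hUa (dsub bφ bψ)))
    refine h.trans ?_
    have k1 : C₀ * (3 * κ1 + 12 * κ1 ^ 2 * C₀) * (|φ x.1 - ψ x.1| / (ε + ‖x.1‖ ^ 2)) ≤
        C * (|φ x.1 - ψ x.1| / (ε + ‖x.1‖ ^ 2)) := by
      gcongr; linarith
    have k2 : 6 * κ1 * C₀ * (‖x.1‖ / (ε + ‖x.1‖ ^ 2)) * (gradSup n φ + gradSup n ψ) ≤
        C * (‖x.1‖ / (ε + ‖x.1‖ ^ 2) + 1) * (gradSup n φ + gradSup n ψ) := by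
      gcongr
      · linarith
      · linarith
    have k3 : 2 * (hessSup n φ + hessSup n ψ) ≤ C * (hessSup n φ + hessSup n ψ) := by
      gcongr; linarith
    linear_combination k1 + k2 + k3 + Hφ
  · change |D2 (util n ε h1 h2 φ ψ) x (vert n) (tang n α)| ≤ _
    rw [Han]
    have h := dadd (abs_mul_le_mul (le_refl |φ x.1 - ψ x.1|) Uan)
      (abs_mul_le_mul (dsub (aφ α) (aψ α)) Un)
    refine h.trans ?_
    have k1 : 2 * κ1 * C₀ ^ 2 * (‖x.1‖ * |φ x.1 - ψ x.1| / (ε + ‖x.1‖ ^ 2) ^ 2) ≤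
        C * (‖x.1‖ * |φ x.1 - ψ x.1| / (ε + ‖x.1‖ ^ 2) ^ 2) := by
      gcongr; linarith
    have k2 : C₀ * ((gradSup n φ + gradSup n ψ) / (ε + ‖x.1‖ ^ 2)) ≤
        C * ((gradSup n φ + gradSup n ψ) / (ε + ‖x.1‖ ^ 2)) := by
      gcongr; linarith
    linear_combination k1 + k2
  · change D2 (util n ε h1 h2 φ ψ) x (vert n) (vert n) = 0
    rw [Hnn, hnn, mul_zero]
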